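/- Completeness/orthogonality relation for the dual Hahn eigenvectors: with orthogonal measure Δ_k² = (Σ_{i=0}^{N_w} c_k(i)²/π_i)^{−1}, for all i, j ∈ {0,...,N_w}: Σ_{k=0}^{N_w} Δ_k²·c_k(i)·c_k(j) = π_j·δ_{ij}. -/

import Mathlib

/-!
Write `d = N2 - Nw` and let `f_k = ∑ i, c_k(i) X^i = (1 - X)^k · ₂F₁(k - N1, k - Nw; d + 1; X)`.
The hypergeometric differential equation for the second factor becomes, after multiplication by
`(1 - X)^k`, a differential equation for `f_k` whose coefficients are the three-term recurrence
`A_{i-1} c(i-1) + B_{i+1} c(i+1) - (A_i + B_i) c(i) = -k (N + 1 - k) c(i)`, with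
`A_i = (N1 - i)(Nw - i)` and `B_i = i (d + i)`: this is `cBL_recurrence`. Thus the `c_k`
are eigenvectors of the Bernoulli–Laplace chain, and they vanish at `Nw + 1`.

The hypergeometric law satisfies the detailed balance `π_{i+1} B_{i+1} = π_i A_i`
(`piBL_balance`), so the weighted products `(μ_l - μ_k) c_k(i) c_l(i) / π_i` telescope
(`christoffel_darboux`) and eigenvectors for different eigenvalues are orthogonal for the weight
`1 / π`. The numbers `μ_k = k (N + 1 - k)` are distinct for `0 ≤ k ≤ Nw ≤ N / 2`, and `c_k(0) = 1`
makes all the norms nonzero. Hence the square matrices `(Δ_k² c_k(i))_{k,i}` and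
`(c_k(i) / π_i)_{i,k}` are inverse to each other on one side, so also on the other, and the latter
is the completeness relation.
-/


open Finset

noncomputable section

/-- Rising factorial (Pochhammer symbol) `a (a+1) ⋯ (a+m-1)` in `ℚ`. -/
def rfQ (a : ℚ) : ℕ → ℚ
  | 0 => 1
  | m + 1 => rfQ a m * (a + m)

/-- Components `c_k(i)` of the `k`-th right eigenvector of the BL transition matrix. -/
def cBL (N1 N2 Nw : ℕ) (k i : ℕ) : ℝ :=
  ((∑ n ∈ Finset.range (min k i + 1),
    (Nat.choose k n : ℚ) * (-1) ^ n
      * rfQ ((k : ℚ) - N1) (i - n) * rfQ ((k : ℚ) - Nw) (i - n)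
      / (rfQ ((N2 : ℚ) - Nw + 1) (i - n) * (Nat.factorial (i - n) : ℚ)) : ℚ) : ℝ)

/-- Up-transition probability `p_j` of the BL model. -/
def pBL (N1 N2 Nw : ℕ) (j : ℕ) : ℝ :=
  ((N1 : ℝ) - j) * ((Nw : ℝ) - j) / ((N1 : ℝ) * N2)

/-- Down-transition probability `q_j` of the BL model. -/
def qBL (N1 N2 Nb : ℕ) (j : ℕ) : ℝ :=
  (j : ℝ) * ((Nb : ℝ) - N1 + j) / ((N1 : ℝ) * N2)

/-- The Bernoulli–Laplace transition matrix `T`. -/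
def TBL (N1 N2 Nw Nb : ℕ) : Matrix (Fin (Nw + 1)) (Fin (Nw + 1)) ℝ :=
  fun i j =>
    if (i : ℕ) = (j : ℕ) + 1 then pBL N1 N2 Nw j
    else if (i : ℕ) + 1 = (j : ℕ) then qBL N1 N2 Nb j
    else if (i : ℕ) = (j : ℕ) then 1 - pBL N1 N2 Nw j - qBL N1 N2 Nb j
    else 0

/-- Eigenvalue `λ_k = 1 - k (N+1-k) / (N1 N2)`. -/
def lamBL (N1 N2 N : ℕ) (k : ℕ) : ℝ :=
  1 - (k : ℝ) * ((N : ℝ) + 1 - k) / ((N1 : ℝ) * N2)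

/-- The hypergeometric stationary distribution `π_i = C(Nw,i) C(N-Nw,N1-i) / C(N,N1)`. -/
def piBL (N1 Nw N : ℕ) (i : ℕ) : ℝ :=
  (Nat.choose Nw i : ℝ) * (Nat.choose (N - Nw) (N1 - i) : ℝ) / (Nat.choose N N1 : ℝ)

/-- The orthogonal measure `Δ_k² = (Σ_i c_k(i)²/π_i)⁻¹`. -/
def DeltaSqBL (N1 N2 Nw N : ℕ) (k : ℕ) : ℝ :=
  (∑ i ∈ Finset.range (Nw + 1), (cBL N1 N2 Nw k i) ^ 2 / piBL N1 Nw N i)⁻¹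

/-- `Δ_k > 0`, the positive square root of `Δ_k²`. -/
def DeltaBL (N1 N2 Nw N : ℕ) (k : ℕ) : ℝ :=
  Real.sqrt (DeltaSqBL N1 N2 Nw N k)

/-- Right eigenvectors of the symmetrized matrix: `v_k(i) = Δ_k c_k(i) / π_i`. -/
def vBL (N1 N2 Nw N : ℕ) (k i : ℕ) : ℝ :=
  DeltaBL N1 N2 Nw N k * cBL N1 N2 Nw k i / piBL N1 Nw N i

/-- Orthonormal eigenvectors of the symmetrized matrix: `w_k(i) = Δ_k c_k(i) / √(π_i)`. -/
def wBL (N1 N2 Nw N : ℕ) (k i : ℕ) : ℝ :=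
  DeltaBL N1 N2 Nw N k * cBL N1 N2 Nw k i / Real.sqrt (piBL N1 Nw N i)

/-! ### Generating functions and the hypergeometric equation -/

open PowerSeries in
lemma coeff_one_sub_X_pow_BL (k n : ℕ) :
    coeff n ((1 - X : PowerSeries ℚ) ^ k) = (Nat.choose k n : ℚ) * (-1) ^ n := by
  induction k generalizing n with
  | zero =>
    cases n with
    | zero => simp
    | succ n => simp [coeff_one]
  | succ k ih =>
    have h : (1 - X : PowerSeries ℚ) ^ (k + 1) = (1 - X) ^ k - X * (1 - X) ^ k := by ring
    rw [h, map_sub, ih]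
    cases n with
    | zero => simp
    | succ n =>
      rw [coeff_succ_X_mul, ih, Nat.choose_succ_succ]
      push_cast
      ring

/-- Taylor coefficients of the Gauss hypergeometric series `₂F₁(α, β; γ; X)`. -/
def hypCoeff (α β γ : ℚ) (m : ℕ) : ℚ :=
  rfQ α m * rfQ β m / (rfQ γ m * (Nat.factorial m : ℚ))

lemma rfQ_pos {γ : ℚ} (hγ : 0 < γ) (m : ℕ) : 0 < rfQ γ m := by
  induction m with
  | zero => simp [rfQ]
  | succ m ih => rw [rfQ]; positivity

lemma hypCoeff_succ (α β γ : ℚ) (hγ : 0 < γ) (m : ℕ) :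
    (γ + m) * (m + 1) * hypCoeff α β γ (m + 1) = (α + m) * (β + m) * hypCoeff α β γ m := by
  have h1 := (rfQ_pos hγ m).ne'
  have h2 : γ + m ≠ 0 := by positivity
  have h3 : (m.factorial : ℚ) ≠ 0 := by positivity
  have h4 : (m : ℚ) + 1 ≠ 0 := by positivity
  simp only [hypCoeff, rfQ, Nat.factorial_succ]
  push_cast
  field_simp

open PowerSeries in
/-- The hypergeometric differential equation `(γ + θ) F' = (θ + α) (θ + β) F`, `θ = X d/dX`. -/
lemma hyp_ode (α β γ : ℚ) (hγ : 0 < γ) :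
    C γ * derivative ℚ (PowerSeries.mk (hypCoeff α β γ))
        + X * derivative ℚ (derivative ℚ (PowerSeries.mk (hypCoeff α β γ)))
      = X * derivative ℚ (X * derivative ℚ (PowerSeries.mk (hypCoeff α β γ)))
        + C (α + β) * (X * derivative ℚ (PowerSeries.mk (hypCoeff α β γ)))
        + C (α * β) * PowerSeries.mk (hypCoeff α β γ) := by
  ext n
  have h := hypCoeff_succ α β γ hγ n
  cases n with
  | zero =>
    simp only [map_add (coeff (R := ℚ) _), coeff_C_mul, coeff_zero_X_mul, coeff_derivative, coeff_mk]
    push_cast at h ⊢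
    linear_combination h
  | succ n =>
    simp only [map_add (coeff (R := ℚ) _), coeff_C_mul, coeff_succ_X_mul, coeff_derivative,
      coeff_mk]
    push_cast at h ⊢
    linear_combination h

open PowerSeries in
/-- The differential equation of `f = (1 - X)^k ₂F₁(k - a, k - b; d + 1; X)`, in the form
`X P + (d + 1 + θ) f' - P - θ (d + θ) f + k (a + b + d + 1 - k) f = 0` with
`P = (θ - a) (θ - b) f` and `θ = X d/dX`. -/
lemma twisted_ode (k : ℕ) (a b d : ℚ) (hd : 0 < d + 1) (f P : PowerSeries ℚ)
    (hf : f = (1 - X) ^ k * PowerSeries.mk (hypCoeff (k - a) (k - b) (d + 1)))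
    (hP : P = X * derivative ℚ (X * derivative ℚ f) - C (a + b) * (X * derivative ℚ f)
      + C (a * b) * f) :
    X * P + C (d + 1) * derivative ℚ f + X * derivative ℚ (derivative ℚ f) - P
      - C d * (X * derivative ℚ f) - X * derivative ℚ (X * derivative ℚ f)
      + C (k * (a + b + d + 1 - k)) * f = 0 := by
  have ode := hyp_ode (k - a) (k - b) (d + 1) hd
  set F : PowerSeries ℚ := PowerSeries.mk (hypCoeff (k - a) (k - b) (d + 1)) with hF
  have hu : (1 - X) * derivative ℚ ((1 - X : PowerSeries ℚ) ^ k) = - C (k : ℚ) * (1 - X) ^ k := by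
    rw [derivative_pow]
    cases k with
    | zero => simp
    | succ k => simp [pow_succ]; ring
  have h1 : (1 - X) * derivative ℚ f
      = (1 - X) ^ k * (- C (k : ℚ) * F + (1 - X) * derivative ℚ F) := by
    rw [hf, Derivation.leibniz]
    simp only [smul_eq_mul]
    linear_combination F * hu
  have h2 : (1 - X) ^ 2 * derivative ℚ (derivative ℚ f)
      = (1 - X) ^ k * (C (k : ℚ) * (C (k : ℚ) - 1) * F - 2 * C (k : ℚ) * (1 - X) * derivative ℚ F
        + (1 - X) ^ 2 * derivative ℚ (derivative ℚ F)) := by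
    have h := congrArg (derivative ℚ) h1
    simp only [Derivation.leibniz, smul_eq_mul, map_add, map_sub, map_neg, derivative_X,
      derivative_C, derivative_one, neg_mul] at h
    linear_combination (1 - X) * h + h1 + (- C (k : ℚ) * F + (1 - X) * derivative ℚ F) * hu
  subst hP
  simp only [Derivation.leibniz, smul_eq_mul, derivative_X, map_add, map_sub, map_mul, map_one,
    mul_one] at ode ⊢
  linear_combination X * h2
    + (C d + 1 + (C a + C b - 1) * X) * h1
    + (C (k : ℚ) * (C a + C b + C d + 1 - C (k : ℚ)) - C a * C b * (1 - X)) * hf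
    + (1 - X) ^ (k + 1) * ode

/-! ### The eigenvector recurrence -/

/-- The rational number whose cast is `cBL`. -/
def cQ (N1 N2 Nw : ℕ) (k i : ℕ) : ℚ :=
  ∑ n ∈ Finset.range (min k i + 1),
    (Nat.choose k n : ℚ) * (-1) ^ n
      * rfQ ((k : ℚ) - N1) (i - n) * rfQ ((k : ℚ) - Nw) (i - n)
      / (rfQ ((N2 : ℚ) - Nw + 1) (i - n) * (Nat.factorial (i - n) : ℚ))

lemma cBL_eq (N1 N2 Nw k i : ℕ) : cBL N1 N2 Nw k i = (cQ N1 N2 Nw k i : ℝ) := rfl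

open PowerSeries in
lemma mk_cQ (N1 N2 Nw k : ℕ) :
    PowerSeries.mk (cQ N1 N2 Nw k)
      = (1 - X) ^ k * PowerSeries.mk (hypCoeff ((k : ℚ) - N1) ((k : ℚ) - Nw) ((N2 : ℚ) - Nw + 1)) := by
  ext i
  rw [coeff_mk, coeff_mul,
    Finset.Nat.sum_antidiagonal_eq_sum_range_succ_mk, cQ]
  -- The terms with `k < n ≤ i` vanish because `C(k, n) = 0`.
  refine Finset.sum_subset_zero_on_sdiff ?_ ?_ ?_
  · intro n hn
    simp only [Finset.mem_range] at hn ⊢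
    omega
  · intro n hn
    simp only [Finset.mem_sdiff, Finset.mem_range] at hn
    rw [coeff_one_sub_X_pow_BL, Nat.choose_eq_zero_of_lt (by omega)]
    simp
  · intro n _
    rw [coeff_one_sub_X_pow_BL, coeff_mk, hypCoeff]
    ring

open PowerSeries in
lemma cQ_recurrence_succ (N1 N2 Nw k : ℕ) (hw2 : Nw ≤ N2) (i : ℕ) :
    ((N1 : ℚ) - i) * (Nw - i) * cQ N1 N2 Nw k i
      + (i + 2) * ((N2 : ℚ) - Nw + i + 2) * cQ N1 N2 Nw k (i + 2)
      - (((N1 : ℚ) - (i + 1)) * (Nw - (i + 1)) + (i + 1) * ((N2 : ℚ) - Nw + (i + 1)))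
        * cQ N1 N2 Nw k (i + 1)
      = - (k * ((N1 : ℚ) + N2 + 1 - k)) * cQ N1 N2 Nw k (i + 1) := by
  have hd : (0 : ℚ) < (N2 : ℚ) - Nw + 1 := by
    have : (Nw : ℚ) ≤ N2 := by exact_mod_cast hw2
    linarith
  have h := congrArg (coeff (i + 1))
    (twisted_ode k N1 Nw ((N2 : ℚ) - Nw) hd _ _ (mk_cQ N1 N2 Nw k) rfl)
  cases i with
  | zero =>
    simp only [map_add (coeff (R := ℚ) _), map_sub (coeff (R := ℚ) _), coeff_C_mul,
      coeff_succ_X_mul, coeff_zero_X_mul, coeff_derivative, coeff_mk, map_zero, zero_add] at h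
    push_cast at h ⊢
    norm_num at h ⊢
    linear_combination h
  | succ i =>
    simp only [map_add (coeff (R := ℚ) _), map_sub (coeff (R := ℚ) _), coeff_C_mul,
      coeff_succ_X_mul, coeff_derivative, coeff_mk, map_zero] at h
    push_cast at h ⊢
    linear_combination h

open PowerSeries in
lemma cQ_recurrence_zero (N1 N2 Nw k : ℕ) (hw2 : Nw ≤ N2) :
    ((N2 : ℚ) - Nw + 1) * cQ N1 N2 Nw k 1 - (N1 : ℚ) * Nw * cQ N1 N2 Nw k 0
      = - (k * ((N1 : ℚ) + N2 + 1 - k)) * cQ N1 N2 Nw k 0 := by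
  have hd : (0 : ℚ) < (N2 : ℚ) - Nw + 1 := by
    have : (Nw : ℚ) ≤ N2 := by exact_mod_cast hw2
    linarith
  have h := congrArg (coeff 0)
    (twisted_ode k N1 Nw ((N2 : ℚ) - Nw) hd _ _ (mk_cQ N1 N2 Nw k) rfl)
  simp only [map_add (coeff (R := ℚ) _), map_sub (coeff (R := ℚ) _), coeff_C_mul,
    coeff_zero_X_mul, coeff_derivative, coeff_mk, map_zero, zero_add] at h
  push_cast at h
  linear_combination h

lemma rfQ_neg_eq_zero (a m : ℕ) (h : a < m) : rfQ (-(a : ℚ)) m = 0 := by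
  induction m with
  | zero => omega
  | succ m ih =>
    rw [rfQ]
    rcases Nat.lt_succ_iff_lt_or_eq.mp h with h | rfl
    · rw [ih h, zero_mul]
    · simp

/-- The eigenvectors vanish just beyond the state space: the polynomial factor
`₂F₁(k - N1, k - Nw; d + 1; X)` has degree at most `Nw - k`. -/
lemma cBL_boundary (N1 N2 Nw k : ℕ) (hk : k ≤ Nw) : cBL N1 N2 Nw k (Nw + 1) = 0 := by
  rw [cBL_eq, cQ, Finset.sum_eq_zero, Rat.cast_zero]
  intro n hn
  rw [Finset.mem_range] at hn
  have h : rfQ ((k : ℚ) - Nw) (Nw + 1 - n) = 0 := by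
    have := rfQ_neg_eq_zero (Nw - k) (Nw + 1 - n) (by omega)
    rwa [Nat.cast_sub hk, neg_sub] at this
  rw [h]
  simp

lemma cBL_zero (N1 N2 Nw k : ℕ) : cBL N1 N2 Nw k 0 = 1 := by
  simp [cBL_eq, cQ, rfQ]

/-- The eigenvector equation. At `i = 0` the first coefficient is a spurious nonzero number
multiplying `c (0 - 1)`, so it is guarded by the `if`. -/
lemma cBL_recurrence (N1 N2 Nw k : ℕ) (hw2 : Nw ≤ N2) (i : ℕ) :
    (if i = 0 then 0
      else ((N1 : ℝ) - (i - 1)) * (Nw - (i - 1)) * cBL N1 N2 Nw k (i - 1))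
      + (i + 1) * ((N2 : ℝ) - Nw + i + 1) * cBL N1 N2 Nw k (i + 1)
      - (((N1 : ℝ) - i) * (Nw - i) + i * ((N2 : ℝ) - Nw + i)) * cBL N1 N2 Nw k i
      = - (k * ((N1 : ℝ) + N2 + 1 - k)) * cBL N1 N2 Nw k i := by
  simp only [cBL_eq]
  cases i with
  | zero =>
    have h := congrArg (Rat.cast : ℚ → ℝ) (cQ_recurrence_zero N1 N2 Nw k hw2)
    push_cast at h ⊢
    simp only [zero_add]
    linear_combination h
  | succ i =>
    have h := congrArg (Rat.cast : ℚ → ℝ) (cQ_recurrence_succ N1 N2 Nw k hw2 i)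
    push_cast at h ⊢
    linear_combination h

/-! ### Detailed balance and orthogonality -/

lemma piBL_pos (N1 N2 Nw Nb N : ℕ) (hN : N = N1 + N2) (hwb : Nw + Nb = N) (hw2 : Nw ≤ N2)
    (i : ℕ) (hi : i ≤ Nw) : 0 < piBL N1 Nw N i := by
  have h1 := Nat.choose_pos hi
  have h2 : 0 < Nat.choose (N - Nw) (N1 - i) := Nat.choose_pos (by omega)
  have h3 : 0 < Nat.choose N N1 := Nat.choose_pos (by omega)
  unfold piBL
  positivity

/-- Detailed balance for the hypergeometric distribution. -/
lemma piBL_balance (N1 N2 Nw Nb N : ℕ) (hN : N = N1 + N2) (hwb : Nw + Nb = N)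
    (hw1 : Nw ≤ N1) (hw2 : Nw ≤ N2) (i : ℕ) (hi : i + 1 ≤ Nw) :
    piBL N1 Nw N (i + 1) * ((i + 1) * ((N2 : ℝ) - Nw + i + 1))
      = piBL N1 Nw N i * (((N1 : ℝ) - i) * (Nw - i)) := by
  have h1 : (Nat.choose Nw (i + 1) : ℝ) * (i + 1) = Nat.choose Nw i * ((Nw : ℝ) - i) := by
    have h := congrArg (Nat.cast : ℕ → ℝ) (Nat.choose_succ_right_eq Nw i)
    push_cast [Nat.cast_sub (show i ≤ Nw by omega)] at h
    exact h
  have h2 : (Nat.choose (N - Nw) (N1 - i) : ℝ) * ((N1 : ℝ) - i)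
      = Nat.choose (N - Nw) (N1 - (i + 1)) * ((N2 : ℝ) - Nw + i + 1) := by
    have h := congrArg (Nat.cast : ℕ → ℝ) (Nat.choose_succ_right_eq (N - Nw) (N1 - (i + 1)))
    rw [show N1 - (i + 1) + 1 = N1 - i by omega,
      show N - Nw - (N1 - (i + 1)) = N2 - Nw + i + 1 by omega] at h
    push_cast [Nat.cast_sub (show i ≤ N1 by omega), Nat.cast_sub hw2] at h
    exact h
  unfold piBL
  linear_combination
    (Nat.choose (N - Nw) (N1 - (i + 1)) : ℝ) * ((N2 : ℝ) - Nw + i + 1) / Nat.choose N N1 * h1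
      - (Nat.choose Nw i : ℝ) * ((Nw : ℝ) - i) / Nat.choose N N1 * h2

/-- The Christoffel–Darboux summation formula for two eigenvectors. -/
lemma christoffel_darboux (N1 N2 Nw Nb N : ℕ) (hN : N = N1 + N2) (hwb : Nw + Nb = N)
    (hw1 : Nw ≤ N1) (hw2 : Nw ≤ N2) (k l m : ℕ) (hm : m ≤ Nw) :
    ((l : ℝ) * ((N1 : ℝ) + N2 + 1 - l) - k * ((N1 : ℝ) + N2 + 1 - k))
      * ∑ i ∈ Finset.range (m + 1), cBL N1 N2 Nw k i * cBL N1 N2 Nw l i / piBL N1 Nw N i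
    = (m + 1) * ((N2 : ℝ) - Nw + m + 1) / piBL N1 Nw N m
      * (cBL N1 N2 Nw k (m + 1) * cBL N1 N2 Nw l m
        - cBL N1 N2 Nw l (m + 1) * cBL N1 N2 Nw k m) := by
  induction m with
  | zero =>
    have hk := cBL_recurrence N1 N2 Nw k hw2 0
    have hl := cBL_recurrence N1 N2 Nw l hw2 0
    simp only [if_true] at hk hl
    rw [Finset.sum_range_one]
    linear_combination (cBL N1 N2 Nw k 0 * hl - cBL N1 N2 Nw l 0 * hk) * (1 / piBL N1 Nw N 0)
  | succ m ih =>
    have hk := cBL_recurrence N1 N2 Nw k hw2 (m + 1)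
    have hl := cBL_recurrence N1 N2 Nw l hw2 (m + 1)
    simp only [Nat.add_one_ne_zero, if_false, Nat.add_sub_cancel] at hk hl
    have hp := (piBL_pos N1 N2 Nw Nb N hN hwb hw2 m (by omega)).ne'
    have hp' := (piBL_pos N1 N2 Nw Nb N hN hwb hw2 (m + 1) hm).ne'
    have hb : ((m : ℝ) + 1) * ((N2 : ℝ) - Nw + m + 1) / piBL N1 Nw N m
        = ((N1 : ℝ) - m) * (Nw - m) / piBL N1 Nw N (m + 1) := by
      rw [div_eq_div_iff hp hp']
      linear_combination piBL_balance N1 N2 Nw Nb N hN hwb hw1 hw2 m hm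
    rw [Finset.sum_range_succ, mul_add, ih (by omega), hb]
    push_cast at hk hl ⊢
    linear_combination
      (cBL N1 N2 Nw k (m + 1) * hl - cBL N1 N2 Nw l (m + 1) * hk) * (1 / piBL N1 Nw N (m + 1))

lemma cBL_orthogonal (N1 N2 Nw Nb N : ℕ) (hN : N = N1 + N2) (hwb : Nw + Nb = N)
    (hw1 : Nw ≤ N1) (hw2 : Nw ≤ N2) (k l : ℕ) (hk : k ≤ Nw) (hl : l ≤ Nw) (hkl : k ≠ l) :
    ∑ i ∈ Finset.range (Nw + 1), cBL N1 N2 Nw k i * cBL N1 N2 Nw l i / piBL N1 Nw N i = 0 := by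
  have h := christoffel_darboux N1 N2 Nw Nb N hN hwb hw1 hw2 k l Nw le_rfl
  rw [cBL_boundary N1 N2 Nw k hk, cBL_boundary N1 N2 Nw l hl] at h
  simp only [zero_mul, sub_self, mul_zero] at h
  refine (mul_eq_zero.mp h).resolve_left ?_
  -- The difference of eigenvalues is `(l - k) (N + 1 - k - l)`, and `k + l ≤ 2 Nw ≤ N`.
  have e : (l : ℝ) * ((N1 : ℝ) + N2 + 1 - l) - k * ((N1 : ℝ) + N2 + 1 - k)
      = ((l : ℝ) - k) * ((N1 : ℝ) + N2 + 1 - k - l) := by ring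
  rw [e]
  refine mul_ne_zero (sub_ne_zero.mpr (by exact_mod_cast hkl.symm)) ?_
  have : (k : ℝ) + l ≤ N1 + N2 := by exact_mod_cast (by omega : k + l ≤ N1 + N2)
  linarith

lemma norm_pos_BL (N1 N2 Nw Nb N : ℕ) (hN : N = N1 + N2) (hwb : Nw + Nb = N)
    (hw2 : Nw ≤ N2) (k : ℕ) :
    0 < ∑ i ∈ Finset.range (Nw + 1), (cBL N1 N2 Nw k i) ^ 2 / piBL N1 Nw N i := by
  have hpi := piBL_pos N1 N2 Nw Nb N hN hwb hw2
  refine Finset.sum_pos' (fun i hi => ?_) ⟨0, by simp, ?_⟩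
  · exact div_nonneg (sq_nonneg _) (hpi i (by simpa [Nat.lt_succ_iff] using hi)).le
  · rw [cBL_zero]
    have := hpi 0 (Nat.zero_le _)
    positivity

/-! ### Completeness -/

/-- Completeness/orthogonality relation: `Σ_k Δ_k² c_k(i) c_k(j) = π_j δ_{ij}`. -/
theorem BL_completeness_relation
    (N1 N2 Nw Nb N : ℕ)
    (hN1 : 1 ≤ N1) (hN2 : 1 ≤ N2) (hN : N = N1 + N2) (hwb : Nw + Nb = N)
    (hw1 : Nw ≤ N1) (hw2 : Nw ≤ N2)
    (i j : ℕ) (hi : i ≤ Nw) (hj : j ≤ Nw) :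
    ∑ k ∈ Finset.range (Nw + 1),
        DeltaSqBL N1 N2 Nw N k * cBL N1 N2 Nw k i * cBL N1 N2 Nw k j
      = piBL N1 Nw N j * (if i = j then 1 else 0) := by
  let A : Matrix (Fin (Nw + 1)) (Fin (Nw + 1)) ℝ :=
    fun k i => DeltaSqBL N1 N2 Nw N k * cBL N1 N2 Nw k i
  let B : Matrix (Fin (Nw + 1)) (Fin (Nw + 1)) ℝ :=
    fun i k => cBL N1 N2 Nw k i / piBL N1 Nw N i
  have hAB : A * B = 1 := by
    ext k l
    have e : (A * B) k l = DeltaSqBL N1 N2 Nw N k *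
        ∑ i ∈ Finset.range (Nw + 1), cBL N1 N2 Nw k i * cBL N1 N2 Nw l i / piBL N1 Nw N i := by
      rw [Matrix.mul_apply, Finset.mul_sum, Finset.sum_range]
      exact Finset.sum_congr rfl fun i _ => by simp only [A, B]; ring
    rw [e]
    by_cases hkl : k = l
    · subst hkl
      rw [Matrix.one_apply_eq, DeltaSqBL]
      simp only [← pow_two]
      exact inv_mul_cancel₀ (norm_pos_BL N1 N2 Nw Nb N hN hwb hw2 k).ne'
    · rw [Matrix.one_apply_ne hkl, cBL_orthogonal N1 N2 Nw Nb N hN hwb hw1 hw2 k l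
        (by omega) (by omega) (fun h => hkl (Fin.ext h)), mul_zero]
  let i' : Fin (Nw + 1) := ⟨i, by omega⟩
  let j' : Fin (Nw + 1) := ⟨j, by omega⟩
  have hBA : (B * A) j' i' = (1 : Matrix _ _ ℝ) j' i' := by rw [mul_eq_one_comm.mp hAB]
  have hp := (piBL_pos N1 N2 Nw Nb N hN hwb hw2 j hj).ne'
  have e : ∑ k ∈ Finset.range (Nw + 1),
      DeltaSqBL N1 N2 Nw N k * cBL N1 N2 Nw k i * cBL N1 N2 Nw k j
      = piBL N1 Nw N j * (B * A) j' i' := by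
    rw [Matrix.mul_apply, Finset.mul_sum, Finset.sum_range]
    refine Finset.sum_congr rfl fun k _ => ?_
    simp only [A, B, i', j']
    field_simp
  rw [e, hBA, Matrix.one_apply]
  simp only [i', j', Fin.mk.injEq, eq_comm]
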